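/- arXiv:2305.10173 — 3 statements merged into one kernel-verified Lean document; each statement's English description precedes it below -/
import Mathlib

section
/- Every algebraically closed field k of characteristic 0 admits an involution: there exists a ring automorphism γ of k with γ ∘ γ = id and γ ≠ id. -/
/-!
Let `v` be a transcendence basis of `k` over `ℚ`, indexed by `ι`. For an ultrafilter on `ι → ℚ`
that avoids every proper hypersurface, the coordinate functions are algebraically independent in
the ultrapower `K` of `ℂ`, so sending `v` to the coordinates extends to an embedding `k → K`.
Coordinatewise conjugation of `K` fixes the coordinates, which are rational valued, and hence
stabilises the image of `k`, a normal extension of the field they generate. On `k` it is an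
involution that moves the square roots of `-1`.
-/

open Filter Polynomial

section Germ

variable {α R S : Type*} {l : Filter α}

theorem charZero_germ [l.NeBot] [AddMonoidWithOne R] [CharZero R] : CharZero (l.Germ R) where
  cast_injective m n h := by
    rw [← Germ.const_nat, ← Germ.const_nat, Germ.const_inj] at h
    exact Nat.cast_injective h

theorem isAlgClosed_germ (U : Ultrafilter α) (F : Type*) [Field F] [IsAlgClosed F] :
    IsAlgClosed ((U : Filter α).Germ F) := by
  refine IsAlgClosed.of_exists_root _ fun p hp hirr => ?_
  have hlift : p ∈ lifts (Germ.coeRingHom (R := F) (U : Filter α)) :=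
    (lifts_iff_coeff_lifts p).mpr fun n => Quotient.exists_rep (p.coeff n)
  obtain ⟨q, rfl, hdeg, hq⟩ := lifts_and_natDegree_eq_and_monic hlift hp
  have exists_root_at (a : α) : ∃ x, (q.map (Pi.evalRingHom (fun _ => F) a)).eval x = 0 := by
    refine IsAlgClosed.exists_root _ (natDegree_pos_iff_degree_pos.mp ?_).ne'
    rw [hq.natDegree_map, hdeg]
    exact hirr.natDegree_pos
  choose r hr using exists_root_at
  have hqr : q.eval r = 0 :=
    funext fun a => (eval_map_apply (f := Pi.evalRingHom (fun _ => F) a) r).symm.trans (hr a)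
  exact ⟨Germ.coeRingHom (U : Filter α) r, by rw [eval_map_apply, hqr, map_zero]⟩

/-- The isomorphism of germ rings given by applying a ring isomorphism to the values. -/
def germMapRingEquiv [Semiring R] [Semiring S] (l : Filter α) (e : R ≃+* S) :
    l.Germ R ≃+* l.Germ S where
  toFun := Germ.map e
  invFun := Germ.map e.symm
  left_inv x := Germ.inductionOn x fun f =>
    congrArg Germ.ofFun (funext fun a => e.symm_apply_apply (f a))
  right_inv x := Germ.inductionOn x fun f =>
    congrArg Germ.ofFun (funext fun a => e.apply_symm_apply (f a))
  map_mul' x y := Germ.inductionOn₂ x y fun f g =>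
    congrArg Germ.ofFun (funext fun a => map_mul e (f a) (g a))
  map_add' x y := Germ.inductionOn₂ x y fun f g =>
    congrArg Germ.ofFun (funext fun a => map_add e (f a) (g a))

/-- Coordinatewise conjugation on germs of functions with values in a commutative star ring. -/
def germConj [CommSemiring R] [StarRing R] (l : Filter α) : l.Germ R ≃+* l.Germ R :=
  germMapRingEquiv l starRingAut

theorem germConj_coe [CommSemiring R] [StarRing R] (f : α → R) :
    germConj l (f : l.Germ R) = (star f : α → R) :=
  rfl

theorem germConj_germConj [CommSemiring R] [StarRing R] (x : l.Germ R) :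
    germConj l (germConj l x) = x :=
  Germ.inductionOn x fun f => by rw [germConj_coe, germConj_coe, star_star]

theorem germConj_ne_self_of_sq_eq_neg_one [l.NeBot] {x : l.Germ ℂ} (hx : x ^ 2 = -1) :
    germConj l x ≠ x := by
  induction x using Germ.inductionOn with | _ f
  intro hfix
  have hsq : ∀ᶠ a in l, f a ^ 2 = -1 := Germ.coe_eq.mp hx
  have hreal : ∀ᶠ a in l, star (f a) = f a := Germ.coe_eq.mp hfix
  obtain ⟨a, ha, ha'⟩ := (hsq.and hreal).exists
  obtain ⟨r, hr⟩ := Complex.conj_eq_iff_real.mp ha'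
  have : r ^ 2 = -1 := by
    rw [hr] at ha
    exact_mod_cast ha
  linarith [sq_nonneg r]

end Germ

section Generic

variable {ι R : Type*} [CommRing R]

/-- A filter on affine space `ι → R` is generic if it concentrates on the complement of every
proper hypersurface; it then plays the role of the generic point. -/
def IsGeneric (l : Filter (ι → R)) : Prop :=
  ∀ p : MvPolynomial ι R, p ≠ 0 → ∀ᶠ a in l, p.eval a ≠ 0

variable (ι R) in
theorem exists_ultrafilter_isGeneric [IsDomain R] [Infinite R] :
    ∃ U : Ultrafilter (ι → R), IsGeneric (U : Filter (ι → R)) := by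
  let nonvanishing (p : {p : MvPolynomial ι R // p ≠ 0}) : Set (ι → R) := {a | p.1.eval a ≠ 0}
  have directed : Directed (· ≥ ·) fun p => 𝓟 (nonvanishing p) := by
    intro p q
    refine ⟨⟨p.1 * q.1, mul_ne_zero p.2 q.2⟩, ?_, ?_⟩ <;>
      simp +contextual [nonvanishing]
  have nonempty (p) : (nonvanishing p).Nonempty := by
    by_contra! h
    refine p.2 (MvPolynomial.funext fun a => ?_)
    by_contra ha
    exact (Set.eq_empty_iff_forall_notMem.mp h) a fun h0 => ha (h0.trans (map_zero _).symm)
  have : Nonempty {p : MvPolynomial ι R // p ≠ 0} := ⟨⟨1, one_ne_zero⟩⟩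
  have : (⨅ p, 𝓟 (nonvanishing p)).NeBot :=
    iInf_neBot_of_directed' directed fun p => principal_neBot_iff.mpr (nonempty p)
  exact ⟨Ultrafilter.of (⨅ p, 𝓟 (nonvanishing p)), fun p hp =>
    Ultrafilter.of_le _ (mem_iInf_of_mem ⟨p, hp⟩ (mem_principal_self _))⟩

/-- The germ of the `i`-th coordinate function of rational affine space, with values in a
`ℚ`-algebra `L`. -/
def germCoord (l : Filter (ι → ℚ)) (L : Type*) [CommRing L] [Algebra ℚ L] (i : ι) : l.Germ L :=
  ((fun a => algebraMap ℚ L (a i) : (ι → ℚ) → L) : l.Germ L)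

theorem germConj_germCoord (l : Filter (ι → ℚ)) (L : Type*) [CommRing L] [StarRing L]
    [Algebra ℚ L] (i : ι) : germConj l (germCoord l L i) = germCoord l L i :=
  congrArg Germ.ofFun (funext fun a => (starRingEnd L).toRatAlgHom.commutes (a i))

theorem algebraicIndependent_germCoord {l : Filter (ι → ℚ)} [l.NeBot] (hl : IsGeneric l)
    (L : Type*) [CommRing L] [Nontrivial L] [Algebra ℚ L] [Algebra ℚ (l.Germ L)] :
    AlgebraicIndependent ℚ (germCoord l L) := by
  rw [algebraicIndependent_iff]
  intro p hp
  by_contra hp0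
  let evalGerm : MvPolynomial ι ℚ →+* l.Germ L := (Germ.coeRingHom l).comp
    (RingHom.pi fun a => (algebraMap ℚ L).comp (MvPolynomial.eval a))
  have aeval_eq : MvPolynomial.aeval (germCoord l L) = evalGerm.toRatAlgHom := by
    ext i
    rw [MvPolynomial.aeval_X]
    exact congrArg Germ.ofFun (funext fun a => by simp)
  rw [aeval_eq] at hp
  have hzero : ∀ᶠ a in l, algebraMap ℚ L (p.eval a) = 0 := Germ.coe_eq.mp hp
  obtain ⟨a, ha, ha'⟩ := (hzero.and (hl p hp0)).exists
  exact ha' ((map_eq_zero _).mp ha)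

end Generic

section TranscendenceBasis

variable {ι F k K : Type*} [Field F] [Field k] [Field K] [Algebra F k] [Algebra F K] {v : ι → k}

theorem exists_algHom_of_isTranscendenceBasis [IsAlgClosed K] (hv : IsTranscendenceBasis F v)
    {w : ι → K} (hw : AlgebraicIndependent F w) : ∃ φ : k →ₐ[F] K, ∀ i, φ (v i) = w i := by
  have := hv.isAlgebraic_field
  let f : IntermediateField.adjoin F (Set.range v) →ₐ[F] K := (IntermediateField.val _).comp
    (hv.1.aevalEquivField.symm.trans hw.aevalEquivField).toAlgHom
  obtain ⟨φ, hφ⟩ := IsAlgClosed.surjective_domRestrict_of_isAlgebraic (E := k) f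
  refine ⟨φ, fun i => ?_⟩
  let x : IntermediateField.adjoin F (Set.range v) :=
    ⟨v i, IntermediateField.subset_adjoin F _ (Set.mem_range_self i)⟩
  have hx : hv.1.aevalEquivField.symm x = algebraMap (MvPolynomial ι F) _ (MvPolynomial.X i) := by
    rw [AlgEquiv.symm_apply_eq]
    exact Subtype.ext (by simp [x])
  calc φ (v i) = hw.aevalEquivField (hv.1.aevalEquivField.symm x) := DFunLike.congr_fun hφ x
    _ = w i := by
      rw [hx, hw.aevalEquivField_algebraMap_apply_coe, MvPolynomial.aeval_X]

theorem normal_adjoin_of_isTranscendenceBasis [IsAlgClosed k] (hv : IsTranscendenceBasis F v) :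
    Normal (IntermediateField.adjoin F (Set.range v)) k :=
  have := hv.isAlgebraic_field
  have : IsAlgClosure (IntermediateField.adjoin F (Set.range v)) k := ⟨inferInstance, inferInstance⟩
  inferInstance

theorem exists_algEquiv_of_normal_adjoin {s : Set k} [Normal (IntermediateField.adjoin F s) k]
    (φ : k →ₐ[F] K) (σ : K ≃ₐ[F] K) (hσ : ∀ x ∈ s, σ (φ x) = φ x) :
    ∃ γ : k ≃ₐ[F] k, ∀ x, φ (γ x) = σ (φ x) := by
  let E := IntermediateField.adjoin F s
  let _ : Algebra k K := φ.toAlgebra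
  have fixes : (σ.toAlgHom.comp φ).comp E.val = φ.comp E.val :=
    IntermediateField.adjoin_algHom_ext F hσ
  let τ : K ≃ₐ[E] K := { σ with commutes' := DFunLike.congr_fun fixes }
  exact ⟨(τ.restrictNormal k).restrictScalars F, τ.restrictNormal_commutes k⟩

end TranscendenceBasis

theorem stmt_3 (k : Type*) [Field k] [IsAlgClosed k] [CharZero k] :
    ∃ γ : k ≃+* k, (∀ x, γ (γ x) = x) ∧ γ ≠ RingEquiv.refl k := by
  obtain ⟨s, hs⟩ := exists_isTranscendenceBasis ℚ k
  obtain ⟨U, hU⟩ := exists_ultrafilter_isGeneric s ℚ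
  have := isAlgClosed_germ U ℂ
  have := charZero_germ (l := (U : Filter (s → ℚ))) (R := ℂ)
  obtain ⟨φ, hφ⟩ :=
    exists_algHom_of_isTranscendenceBasis hs (algebraicIndependent_germCoord hU ℂ)
  have := normal_adjoin_of_isTranscendenceBasis hs
  obtain ⟨γ, hγ⟩ := exists_algEquiv_of_normal_adjoin φ
    (germConj (U : Filter (s → ℚ))).toRatAlgEquiv <| Set.forall_mem_range.mpr fun i => by
      rw [hφ]
      exact germConj_germCoord _ ℂ i
  have hγγ (x : k) : γ (γ x) = x := φ.injective <|
    calc φ (γ (γ x)) = germConj _ (φ (γ x)) := hγ _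
      _ = germConj _ (germConj _ (φ x)) := congrArg _ (hγ x)
      _ = φ x := germConj_germConj _
  refine ⟨γ, hγγ, fun h => ?_⟩
  obtain ⟨j, hj⟩ := IsAlgClosed.exists_pow_nat_eq (-1 : k) two_pos
  refine germConj_ne_self_of_sq_eq_neg_one (x := φ j) ?_ ?_
  · rw [← map_pow, hj, map_neg, map_one]
  · exact (hγ j).symm.trans (congrArg φ (DFunLike.congr_fun h j))
end

section
/- (Schnor's theorem) Let ℓ/k be an extension of algebraically closed fields (k an algebraically closed subfield of the algebraically closed field ℓ), and let γ be an involution of k (a ring automorphism with γ ∘ γ = id and γ ≠ id). Then there exists an involution γ̄ of ℓ (a ring automorphism of ℓ with γ̄ ∘ γ̄ = id and γ̄ ≠ id) such that γ̄ maps k into k and the restriction of γ̄ to k equals γ. -/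
/-!
An action of a monoid on `k` extends for free to any ultrapower of `k`, which is again algebraically
closed. Take an ultrafilter on the functions `ι → k`, with `ι` a transcendence basis of `ℓ / k`,
that avoids the zero locus of every nonzero polynomial: the germs of the coordinate functions are
then algebraically independent over `k`. If the fixed field is infinite, the functions with values
in the fixed field can moreover be taken to form a set of the ultrafilter, and then these germs are
fixed by the action. Now `ℓ` embeds into the ultrapower as the set of elements algebraic over the
polynomial ring `k[ι]`, and the action maps `k[ι]`, hence also this set, to itself. For an
involution of an algebraically closed field, `k` is finite over the fixed field, which is therefore
infinite.
-/

open Filter Polynomial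

section Germ

variable {I R : Type*}

instance mulSemiringActionGerm {M : Type*} [Monoid M] [Semiring R] [MulSemiringAction M R]
    (l : Filter I) : MulSemiringAction M (Germ l R) where
  smul_one m := congrArg ((↑) : R → Germ l R) (smul_one m)
  smul_mul m f g := Germ.inductionOn₂ f g fun f g =>
    congrArg ((↑) : (I → R) → Germ l R) (funext fun i => smul_mul' m (f i) (g i))

theorem exists_eval_eq_zero_of_monic_pi {K : I → Type*} [∀ i, Field (K i)]
    [∀ i, IsAlgClosed (K i)] {p : (∀ i, K i)[X]} (hp : p.Monic) (hdeg : p.natDegree ≠ 0) :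
    ∃ x, p.eval x = 0 := by
  have hroot (i : I) : ∃ x, (p.map (Pi.evalRingHom K i)).IsRoot x :=
    IsAlgClosed.exists_root _ fun h => hdeg <| (hp.natDegree_map (Pi.evalRingHom K i)).symm.trans
      (natDegree_eq_zero_iff_degree_le_zero.2 h.le)
  choose x hx using hroot
  exact ⟨x, funext fun i => (eval_map_apply (f := Pi.evalRingHom K i) x).symm.trans (hx i)⟩

instance isAlgClosed_germ_s4 [Field R] [IsAlgClosed R] (U : Ultrafilter I) :
    IsAlgClosed (Germ (U : Filter I) R) := by
  refine .of_exists_root _ fun p hp hirr => ?_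
  have hlift : p ∈ lifts (Germ.coeRingHom (U : Filter I) (R := R)) :=
    (mem_lifts p).2 (map_surjective _ Quot.mk_surjective p)
  obtain ⟨q, rfl, hdeg, hq⟩ := lifts_and_natDegree_eq_and_monic hlift hp
  obtain ⟨x, hx⟩ := exists_eval_eq_zero_of_monic_pi hq (hdeg ▸ hirr.natDegree_pos.ne')
  exact ⟨_, (eval_map_apply _ _).trans (by rw [hx, map_zero])⟩

end Germ

section GenericPoint

variable {ι R : Type*}

theorem exists_ultrafilter_eventually_eval_ne_zero [CommRing R] [IsDomain R] {s : ι → Set R}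
    (hs : ∀ i, (s i).Infinite) :
    ∃ U : Ultrafilter (ι → R), (∀ᶠ v in U, v ∈ Set.univ.pi s) ∧
      ∀ p : MvPolynomial ι R, p ≠ 0 → ∀ᶠ v in U, MvPolynomial.eval v p ≠ 0 := by
  let D (p : {p : MvPolynomial ι R // p ≠ 0}) : Set (ι → R) :=
    {v ∈ Set.univ.pi s | MvPolynomial.eval v p.1 ≠ 0}
  have hD (p) : (𝓟 (D p)).NeBot := by
    rw [principal_neBot_iff]
    by_contra! h
    refine p.2 (MvPolynomial.funext_set s hs fun v hv => ?_)
    by_contra hne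
    exact h.subset (show v ∈ D p from ⟨hv, by simpa using hne⟩)
  have hdir : Directed (· ≥ ·) fun p => 𝓟 (D p) := fun p q => by
    refine ⟨⟨p.1 * q.1, mul_ne_zero p.2 q.2⟩, ?_, ?_⟩ <;>
      refine principal_mono.2 fun v hv => ⟨hv.1, ?_⟩ <;>
      simp_all [D]
  have : (⨅ p, 𝓟 (D p)).NeBot := iInf_neBot_of_directed hdir hD
  have hU (p) : ∀ᶠ v in (Ultrafilter.of (⨅ p, 𝓟 (D p)) : Filter (ι → R)), v ∈ D p :=
    Ultrafilter.of_le _ (mem_iInf_of_mem p (mem_principal_self _))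
  exact ⟨.of (⨅ p, 𝓟 (D p)), (hU ⟨1, one_ne_zero⟩).mono fun _ hv => hv.1,
    fun p hp => (hU ⟨p, hp⟩).mono fun _ hv => hv.2⟩

/-- The evaluation of polynomials at the point whose coordinates are the germs of the coordinate
functions along a filter on `ι → R`; a polynomial is sent to the germ of its polynomial function. -/
noncomputable def evalGerm [CommSemiring R] (l : Filter (ι → R)) : MvPolynomial ι R →+* Germ l R :=
  (Germ.coeRingHom l).comp (RingHom.pi MvPolynomial.eval)

theorem evalGerm_injective [CommRing R] {l : Filter (ι → R)} [l.NeBot]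
    (hl : ∀ p : MvPolynomial ι R, p ≠ 0 → ∀ᶠ v in l, MvPolynomial.eval v p ≠ 0) :
    Function.Injective (evalGerm l) := by
  refine (injective_iff_map_eq_zero _).2 fun p hp => by_contra fun hne => ?_
  obtain ⟨v, hv, hv'⟩ := ((hl p hne).and (Germ.coe_eq.1 hp)).exists
  exact hv hv'

theorem smul_evalGerm [CommSemiring R] {M : Type*} [Monoid M] [MulSemiringAction M R]
    {l : Filter (ι → R)} {m : M} (hl : ∀ᶠ v in l, ∀ i, m • v i = v i) (p : MvPolynomial ι R) :
    m • evalGerm l p = evalGerm l (p.map (MulSemiringAction.toRingHom M R m)) := by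
  refine Germ.coe_eq.2 (hl.mono fun v hv => ?_)
  change MulSemiringAction.toRingHom M R m (MvPolynomial.eval v p) = MvPolynomial.eval v _
  rw [MvPolynomial.eval_map, MvPolynomial.eval, MvPolynomial.coe_eval₂Hom,
    MvPolynomial.eval₂_comp_left, RingHom.comp_id]
  exact congrArg (MvPolynomial.eval₂ _ · p) (funext hv)

end GenericPoint

section Descent

variable {P K L : Type*} [CommRing P] [Field K] [Field L]

theorem mem_range_algebraMap_of_isAlgebraic [Algebra K L] [IsAlgClosed K] {x : L}
    (hx : IsAlgebraic K x) : x ∈ (algebraMap K L).range :=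
  minpoly.mem_range_of_degree_eq_one K x
    (IsAlgClosed.degree_eq_one_of_irreducible K (minpoly.irreducible hx.isIntegral))

theorem map_algebraMap_mem_range [Algebra K L] [IsAlgClosed K] [Algebra P K] [Algebra P L]
    [IsScalarTower P K L] [FaithfulSMul P K] [Algebra.IsAlgebraic P K] {φ : P →+* P}
    (hφ : Function.Injective φ) {σ : L →+* L}
    (hσ : (algebraMap P L).comp φ = σ.comp (algebraMap P L)) (x : K) :
    σ (algebraMap K L x) ∈ (algebraMap K L).range := by
  have hx : IsAlgebraic P (algebraMap K L x) := (Algebra.IsAlgebraic.isAlgebraic x).algebraMap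
  exact mem_range_algebraMap_of_isAlgebraic
    ((hx.ringHom_of_comp_eq φ σ hφ hσ).extendScalars (FaithfulSMul.algebraMap_injective P K))

theorem exists_mulSemiringAction_of_smul_mem_range [Algebra K L] {M : Type*} [Monoid M]
    [MulSemiringAction M L]
    (h : ∀ (m : M) (x : K), m • algebraMap K L x ∈ (algebraMap K L).range) :
    ∃ _ : MulSemiringAction M K, ∀ (m : M) (x : K),
      algebraMap K L (m • x) = m • algebraMap K L x := by
  choose smul hsmul using h
  let _ : SMul M K := ⟨smul⟩
  have : SMulDistribClass M K L := ⟨fun m x y => by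
    rw [Algebra.smul_def, smul_mul', ← hsmul, ← Algebra.smul_def]; rfl⟩
  exact ⟨mulSemiringActionOfSmulDistribClass K L M, hsmul⟩

theorem exists_mulSemiringAction_of_isAlgebraic [IsAlgClosed K] [IsAlgClosed L] [Algebra P K]
    [Algebra P L] [FaithfulSMul P K] [FaithfulSMul P L] [Algebra.IsAlgebraic P K]
    {M : Type*} [Monoid M] [MulSemiringAction M L] {φ : M → P →+* P}
    (hφ : ∀ m, Function.Injective (φ m))
    (hsmul : ∀ (m : M) (p : P), m • algebraMap P L p = algebraMap P L (φ m p)) :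
    ∃ _ : MulSemiringAction M K, ∀ (m : M) (p : P),
      m • algebraMap P K p = algebraMap P K (φ m p) := by
  have : IsDomain P := (FaithfulSMul.algebraMap_injective P K).isDomain
  let f : K →ₐ[P] L := IsAlgClosed.lift
  let _ : Algebra K L := f.toRingHom.toAlgebra
  have : IsScalarTower P K L := .of_algHom f
  have hrange (m : M) (x : K) : m • algebraMap K L x ∈ (algebraMap K L).range :=
    map_algebraMap_mem_range (P := P) (hφ m) (σ := MulSemiringAction.toRingHom M L m)
      (RingHom.ext fun p => (hsmul m p).symm) x
  obtain ⟨act, hact⟩ := exists_mulSemiringAction_of_smul_mem_range hrange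
  refine ⟨act, fun m p => (algebraMap K L).injective ?_⟩
  rw [hact, ← IsScalarTower.algebraMap_apply, ← IsScalarTower.algebraMap_apply, hsmul]

end Descent

theorem infinite_fixedPoints_subfield (G F : Type*) [Group G] [Finite G] [Field F] [Infinite F]
    [MulSemiringAction G F] : Infinite (FixedPoints.subfield G F) := by
  by_contra h
  have : Finite (FixedPoints.subfield G F) := not_infinite_iff_finite.1 h
  exact not_finite_iff_infinite.2 ‹Infinite F› (Module.finite_of_finite (FixedPoints.subfield G F))

theorem stmt_4_general (k ℓ M : Type*) [Field k] [Field ℓ] [Algebra k ℓ]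
    [IsAlgClosed k] [IsAlgClosed ℓ] [Monoid M] [MulSemiringAction M k]
    [Infinite (FixedPoints.subfield M k)] :
    ∃ _ : MulSemiringAction M ℓ, ∀ (m : M) (a : k),
      m • algebraMap k ℓ a = algebraMap k ℓ (m • a) := by
  obtain ⟨ι, b, hb⟩ := exists_isTranscendenceBasis' k ℓ
  obtain ⟨U, hfix, hU⟩ := exists_ultrafilter_eventually_eval_ne_zero (ι := ι)
    fun _ => Set.infinite_coe_iff.1 ‹Infinite (FixedPoints.subfield M k)›
  let P := MvPolynomial ι k
  let Ω := Germ (U : Filter (ι → k)) k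
  let _ : Algebra P ℓ := (MvPolynomial.aeval b).toAlgebra
  let _ : Algebra P Ω := (evalGerm _).toAlgebra
  have : IsScalarTower k P ℓ := .of_algHom (MvPolynomial.aeval b)
  have : FaithfulSMul P ℓ := (faithfulSMul_iff_algebraMap_injective P ℓ).2 hb.1
  have : FaithfulSMul P Ω := (faithfulSMul_iff_algebraMap_injective P Ω).2 (evalGerm_injective hU)
  have : Algebra.IsAlgebraic P ℓ := (hb.isAlgebraic_iff (S := P)).2 fun i =>
    MvPolynomial.aeval_X (R := k) b i ▸ isAlgebraic_algebraMap (MvPolynomial.X i : P)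
  obtain ⟨act, hact⟩ := exists_mulSemiringAction_of_isAlgebraic (K := ℓ)
    (fun m : M => MvPolynomial.map_injective _ (MulSemiringAction.toRingHom M k m).injective)
    fun m => smul_evalGerm (hfix.mono fun v hv i => hv i trivial m)
  refine ⟨act, fun m a => ?_⟩
  simp only [IsScalarTower.algebraMap_apply k P ℓ]
  exact (hact m _).trans (congrArg _ (MvPolynomial.map_C _ a))

theorem stmt_4 (k ℓ : Type*) [Field k] [Field ℓ] [Algebra k ℓ]
    [IsAlgClosed k] [IsAlgClosed ℓ]
    (γ : k ≃+* k) (hinv : ∀ x, γ (γ x) = x) (hne : γ ≠ RingEquiv.refl k) :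
    ∃ γbar : ℓ ≃+* ℓ, (∀ x, γbar (γbar x) = x) ∧ γbar ≠ RingEquiv.refl ℓ ∧
      ∀ a : k, γbar (algebraMap k ℓ a) = algebraMap k ℓ (γ a) := by
  let g : Subgroup.zpowers γ := ⟨γ, Subgroup.mem_zpowers γ⟩
  have hg : g * g = 1 := Subtype.ext (RingEquiv.ext hinv)
  have : Finite (Subgroup.zpowers γ) :=
    finite_zpowers.2 (isOfFinOrder_iff_pow_eq_one.2 ⟨2, two_pos, RingEquiv.ext hinv⟩)
  have := infinite_fixedPoints_subfield (Subgroup.zpowers γ) k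
  obtain ⟨_, hext⟩ := stmt_4_general k ℓ (Subgroup.zpowers γ)
  refine ⟨MulSemiringAction.toRingEquiv _ ℓ g, fun x => ?_, fun h => hne ?_, hext g⟩
  · change g • g • x = x
    rw [smul_smul, hg, one_smul]
  · ext a
    exact (algebraMap k ℓ).injective ((hext g a).symm.trans (RingEquiv.congr_fun h _))
end

section
/- (Embedding of standard Hermitian forms) Let ℓ/k be an extension of algebraically closed fields, let γ be an involution of k, and let d be a positive integer. Then there exists an involution γ̄ of ℓ extending γ such that the standard (γ̄,1)-Hermitian form on ℓ^d, given by ⟨x,y⟩ = Σ_{j=1}^{d} γ̄(x_j)·y_j, restricts on k^d ⊆ ℓ^d to the standard (γ,1)-Hermitian form ⟨x,y⟩ = Σ_{j=1}^{d} γ(x_j)·y_j. -/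
/-!
The fixed field of `γ` is semireal: sums of two squares in it are norms from `k`, hence squares,
while `-1` is the square of some `i` in `k` moved by `γ`. Inside `ℓ`, enlarge it to a maximal
semireal subfield `F`. A semireal field stays semireal after adjoining a transcendental element, a
square root of `x` when `-x` is not a sum of squares, or, by Springer's descent, a root of an
irreducible polynomial of odd degree. Maximality therefore makes `F` real closed and `ℓ` algebraic
over `F`, so `ℓ = F(i)`, and the conjugation `i ↦ -i` over `F` extends `γ`.
-/

open Polynomial IntermediateField

section FormallyReal

theorem isSumSq_map {G R S : Type*} [NonUnitalNonAssocSemiring R] [NonUnitalNonAssocSemiring S]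
    [FunLike G R S] [NonUnitalRingHomClass G R S] (f : G) {s : R} (hs : IsSumSq s) :
    IsSumSq (f s) := by
  induction hs with
  | zero => simp
  | sq_add a _ ih => simpa using IsSumSq.sq_add (f a) ih

theorem exists_isSumSq_map_eq {G R S : Type*} [NonUnitalNonAssocSemiring R]
    [NonUnitalNonAssocSemiring S] [FunLike G R S] [NonUnitalRingHomClass G R S] {f : G}
    (hf : Function.Surjective f) {s : S} (hs : IsSumSq s) : ∃ t, IsSumSq t ∧ f t = s := by
  induction hs with
  | zero => exact ⟨0, .zero, map_zero f⟩
  | sq_add a _ ih =>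
    obtain ⟨b, rfl⟩ := hf a
    obtain ⟨t, ht, rfl⟩ := ih
    exact ⟨b * b + t, .sq_add b ht, by simp⟩

theorem isSquare_of_isSumSq_of_forall_isSquare_add {R : Type*} [NonUnitalNonAssocSemiring R]
    (h : ∀ a b : R, IsSquare (a * a + b * b)) {s : R} (hs : IsSumSq s) : IsSquare s := by
  induction hs with
  | zero => exact .zero
  | sq_add a _ ih =>
    obtain ⟨b, rfl⟩ := ih
    exact h a b

theorem isSemireal_of_ringHom {R S : Type*} [NonAssocSemiring R] [NonAssocSemiring S]
    [IsSemireal S] (f : R →+* S) : IsSemireal R where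
  one_add_ne_zero hs h :=
    IsSemireal.one_add_ne_zero (isSumSq_map f hs) (by simpa using congrArg f h)

instance isSemireal_of_isFormallyReal {R : Type*} [NonAssocSemiring R] [Nontrivial R]
    [IsFormallyReal R] : IsSemireal R where
  one_add_ne_zero hs h := one_ne_zero (IsFormallyReal.eq_zero_of_add_right .one hs h)

instance isFormallyReal_of_isSemireal {F : Type*} [Field F] [IsSemireal F] : IsFormallyReal F :=
  .of_eq_zero_of_eq_zero_of_mul_self_add fun {s a} hs h ↦ by
    by_contra ha
    refine IsSemireal.one_add_ne_zero (hs.mul (.mul_self a⁻¹)) ?_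
    field_simp
    linear_combination h

theorem isSemireal_of_isFractionRing (R : Type*) {K : Type*} [CommRing R] [Nontrivial R]
    [IsFormallyReal R] [CommRing K] [Algebra R K] [IsFractionRing R K] : IsSemireal K := by
  have clear_denominators {s : K} (hs : IsSumSq s) : ∃ t, IsSumSq t ∧
      ∃ b ∈ nonZeroDivisors R, s * algebraMap R K (b * b) = algebraMap R K t := by
    induction hs with
    | zero => exact ⟨0, .zero, 1, one_mem _, by simp⟩
    | @sq_add x s _ ih =>
      obtain ⟨t, ht, b, hb, hst⟩ := ih
      obtain ⟨⟨u, v⟩, hx⟩ := IsLocalization.surj (nonZeroDivisors R) x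
      refine ⟨u * b * (u * b) + v * v * t, .sq_add _ ((IsSumSq.mul_self _).mul ht),
        v * b, mul_mem v.2 hb, ?_⟩
      simp only [map_add, map_mul] at hst hx ⊢
      rw [← hst, ← hx]
      ring
  refine .of_not_isSumSq_neg_one fun hs ↦ ?_
  obtain ⟨t, ht, b, hb, hst⟩ := clear_denominators hs
  have hbt : b * b + t = 0 := by
    refine IsFractionRing.injective R K ?_
    rw [map_add, ← hst, map_zero]
    ring
  have hbb : b * b = 0 := IsFormallyReal.eq_zero_of_add_right (.mul_self b) ht hbt
  exact zero_notMem_nonZeroDivisors (hbb ▸ mul_mem hb hb)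

end FormallyReal

section Polynomial

variable {R : Type*} [Ring R] [IsFormallyReal R]

-- Leading coefficients of squares cannot cancel, so degrees of sums of squares are maxima.
theorem even_natDegree_and_isSumNonzeroSq_leadingCoeff {P : R[X]} (hP : IsSumNonzeroSq P) :
    Even P.natDegree ∧ IsSumNonzeroSq P.leadingCoeff := by
  have ne_zero {c : R} (hc : IsSumNonzeroSq c) : c ≠ 0 := fun h ↦
    IsFormallyReal.not_isSumNonzeroSq_zero (h ▸ hc)
  have mul_self {a : R[X]} (ha : a ≠ 0) :
      Even (a * a).natDegree ∧ IsSumNonzeroSq (a * a).leadingCoeff := by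
    have hlead := IsSumNonzeroSq.sq (leadingCoeff_ne_zero.2 ha)
    rw [natDegree_mul' (ne_zero hlead), leadingCoeff_mul' (ne_zero hlead)]
    exact ⟨⟨_, rfl⟩, hlead⟩
  induction hP with
  | sq ha => exact mul_self ha
  | @sq_add a s ha _ ih =>
    obtain ⟨hdeg, hlead⟩ := mul_self ha
    rcases lt_trichotomy (a * a).degree s.degree with h | h | h
    · rwa [natDegree_eq_of_degree_eq (degree_add_eq_right_of_degree_lt h),
        leadingCoeff_add_of_degree_lt h]
    · have hlead_add := hlead.add ih.2
      have hdeg_add := degree_add_eq_of_leadingCoeff_add_ne_zero (ne_zero hlead_add)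
      rw [h, max_self] at hdeg_add
      rw [natDegree_eq_of_degree_eq hdeg_add, leadingCoeff_add_of_degree_eq h (ne_zero hlead_add)]
      exact ⟨ih.1, hlead_add⟩
    · rw [natDegree_eq_of_degree_eq (degree_add_eq_left_of_degree_lt h),
        leadingCoeff_add_of_degree_lt' h]
      exact ⟨hdeg, hlead⟩

instance isFormallyReal_polynomial : IsFormallyReal R[X] where
  not_isSumNonzeroSq_zero h := IsFormallyReal.not_isSumNonzeroSq_zero <| by
    simpa using (even_natDegree_and_isSumNonzeroSq_leadingCoeff h).2

theorem even_natDegree_of_isSumSq {P : R[X]} (hP : IsSumSq P) : Even P.natDegree := by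
  by_cases h0 : P = 0
  · simp [h0]
  · exact (even_natDegree_and_isSumNonzeroSq_leadingCoeff (hP.isSumNonzeroSq_of_ne_zero h0)).1

theorem isSumSq_leadingCoeff {P : R[X]} (hP : IsSumSq P) : IsSumSq P.leadingCoeff := by
  by_cases h0 : P = 0
  · simp [h0]
  · exact (even_natDegree_and_isSumNonzeroSq_leadingCoeff
      (hP.isSumNonzeroSq_of_ne_zero h0)).2.isSumSq

end Polynomial

section Springer

theorem exists_isSumSq_dvd_sub_natDegree_add_two_le {F : Type*} [Field F] {f P : F[X]}
    (hf : 0 < f.natDegree) (hP : IsSumSq P) :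
    ∃ Q, IsSumSq Q ∧ f ∣ P - Q ∧ Q.natDegree + 2 ≤ 2 * f.natDegree := by
  induction hP with
  | zero => exact ⟨0, .zero, by simp, by simp; omega⟩
  | @sq_add a s _ ih =>
    obtain ⟨Q, hQ, hdvd, hdeg⟩ := ih
    refine ⟨a % f * (a % f) + Q, .sq_add _ hQ, ?_, ?_⟩
    · obtain ⟨g, hg⟩ := hdvd
      refine ⟨a / f * (a + a % f) + g, ?_⟩
      linear_combination hg - (a + a % f) * EuclideanDomain.mod_add_div a f
    · have hmod : (a % f).natDegree < f.natDegree := natDegree_mod_lt a hf.ne'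
      have hmul : (a % f * (a % f)).natDegree ≤ (a % f).natDegree + (a % f).natDegree :=
        natDegree_mul_le
      have hadd := natDegree_add_le (a % f * (a % f)) Q
      omega

variable {F : Type*} [Field F] [IsSemireal F] {f P : F[X]}

theorem exists_isSumSq_one_add_eq_mul (hf : 0 < f.natDegree) (hP : IsSumSq P)
    (hdvd : f ∣ 1 + P) :
    ∃ Q g, IsSumSq Q ∧ 1 + Q = f * g ∧ g.natDegree + 2 ≤ f.natDegree := by
  obtain ⟨Q, hQ, hPQ, hdeg⟩ := exists_isSumSq_dvd_sub_natDegree_add_two_le hf hP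
  obtain ⟨g, hg⟩ : f ∣ 1 + Q := by
    convert dvd_sub hdvd hPQ using 1
    ring
  have hfg : f * g ≠ 0 := hg ▸ IsSemireal.one_add_ne_zero hQ
  have hdeg_add := natDegree_mul (left_ne_zero_of_mul hfg) (right_ne_zero_of_mul hfg)
  have hdeg_le := natDegree_add_le 1 Q
  rw [hg, natDegree_one] at hdeg_le
  exact ⟨Q, g, hQ, hg, by omega⟩

/- Springer's descent: reducing `P` modulo `f` leaves a cofactor `g` of smaller degree, which is
again odd because `1 + Q` has even degree. -/
theorem not_dvd_one_add_of_odd_natDegree (hf : Odd f.natDegree) (hP : IsSumSq P) :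
    ¬ f ∣ 1 + P := by
  induction hn : f.natDegree using Nat.strong_induction_on generalizing f P with
  | _ n ih =>
  intro hdvd
  obtain ⟨Q, g, hQ, hfg, hdeg⟩ := exists_isSumSq_one_add_eq_mul hf.pos hP hdvd
  have hne : f * g ≠ 0 := hfg ▸ IsSemireal.one_add_ne_zero hQ
  have heven : Even (f.natDegree + g.natDegree) := by
    rw [← natDegree_mul (left_ne_zero_of_mul hne) (right_ne_zero_of_mul hne), ← hfg]
    exact even_natDegree_of_isSumSq (IsSumSq.one.add hQ)
  have hodd : Odd g.natDegree := by grind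
  exact ih g.natDegree (by omega) hodd hQ rfl (hfg ▸ dvd_mul_left g f)

theorem isSumSq_neg_of_X_sq_sub_C_dvd_one_add {x : F} (hP : IsSumSq P)
    (hdvd : X ^ 2 - C x ∣ 1 + P) : IsSumSq (-x) := by
  have hdeg : (X ^ 2 - C x).natDegree = 2 := natDegree_X_pow_sub_C
  obtain ⟨Q, g, hQ, hfg, hg⟩ := exists_isSumSq_one_add_eq_mul (by simp [hdeg]) hP hdvd
  obtain ⟨c, rfl⟩ : ∃ c, g = C c := ⟨_, eq_C_of_natDegree_eq_zero (by omega)⟩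
  have hc : IsSumSq c := by
    simpa [hfg, leadingCoeff_X_pow_sub_C] using isSumSq_leadingCoeff (IsSumSq.one.add hQ)
  have hc0 : c ≠ 0 := by
    rintro rfl
    exact IsSemireal.one_add_ne_zero hQ (by simpa using hfg)
  have heval : 1 + Q.eval 0 = -x * c := by simpa using congrArg (eval 0) hfg
  have hQ0 : IsSumSq (Q.eval 0) := isSumSq_map (evalRingHom 0) hQ
  have hx : -x = (1 + Q.eval 0) * c * (c⁻¹ * c⁻¹) := by rw [heval]; field_simp
  rw [hx]
  exact ((IsSumSq.one.add hQ0).mul hc).mul (.mul_self _)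

end Springer

section AdjoinSimple

variable {F L : Type*} [Field F] [Field L] [Algebra F L] {α : L}

theorem isSemireal_adjoin_simple_of_transcendental [IsSemireal F] (hα : Transcendental F α) :
    IsSemireal F⟮α⟯ :=
  have : IsSemireal (RatFunc F) := isSemireal_of_isFractionRing F[X]
  isSemireal_of_ringHom (RatFunc.algEquivOfTranscendental α hα).symm.toRingEquiv.toRingHom

theorem isSemireal_adjoin_simple_of_not_dvd {f : F[X]} (hf : Irreducible f)
    (hα : aeval α f = 0) (h : ∀ P, IsSumSq P → ¬ f ∣ 1 + P) : IsSemireal F⟮α⟯ := by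
  refine .of_not_isSumSq_neg_one fun hs ↦ ?_
  have hint : IsIntegral F α := IsAlgebraic.isIntegral ⟨f, hf.ne_zero, hα⟩
  have hsurj : Function.Surjective (aeval (R := F) (AdjoinSimple.gen F α)) := fun y ↦ by
    obtain ⟨p, hp⟩ := (adjoin.powerBasis hint).exists_eq_aeval' y
    exact ⟨p, hp.symm⟩
  obtain ⟨P, hP, hPα⟩ := exists_isSumSq_map_eq hsurj hs
  have hroot : aeval α (1 + P) = 0 := by
    have hPα' : aeval α P = -1 := by
      rw [← AdjoinSimple.coe_aeval_gen_apply]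
      exact congrArg Subtype.val hPα
    rw [map_add, hPα', map_one, add_neg_cancel]
  exact h P hP ((Dvd.intro _ (minpoly.eq_of_irreducible hf hα)).trans (minpoly.dvd F α hroot))

end AdjoinSimple

section Maximal

/-- The field `F` is maximal among the formally real (semireal) subfields of its extension `L` that
contain it. Formal reality of `F` itself is assumed separately. -/
def IsMaximalSemireal (F L : Type*) [Field F] [Field L] [Algebra F L] : Prop :=
  ∀ K : IntermediateField F L, IsSemireal K → K = ⊥

theorem isSemireal_iSup_of_directed {ι F L : Type*} [Nonempty ι] [Field F] [Field L] [Algebra F L]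
    {K : ι → IntermediateField F L} (hK : Directed (· ≤ ·) K) (hreal : ∀ i, IsSemireal (K i)) :
    IsSemireal (⨆ i, K i : IntermediateField F L) := by
  have mem_iSup {x : L} : x ∈ ⨆ i, K i ↔ ∃ i, x ∈ K i := by
    rw [← SetLike.mem_coe, coe_iSup_of_directed hK]
    exact Set.mem_iUnion
  have descend {s : (⨆ i, K i : IntermediateField F L)} (hs : IsSumSq s) :
      ∃ i, ∃ t : K i, IsSumSq t ∧ (t : L) = s := by
    induction hs with
    | zero => exact ⟨Classical.arbitrary ι, 0, .zero, rfl⟩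
    | sq_add a _ ih =>
      obtain ⟨i, t, ht, hts⟩ := ih
      obtain ⟨j, ha⟩ := mem_iSup.1 a.2
      obtain ⟨m, him, hjm⟩ := hK i j
      exact ⟨m, ⟨a, hjm ha⟩ * ⟨a, hjm ha⟩ + inclusion him t,
        .sq_add _ (isSumSq_map (inclusion him) ht), by simp [hts]⟩
  refine .of_not_isSumSq_neg_one fun hs ↦ ?_
  obtain ⟨i, t, ht, hts⟩ := descend hs
  have ht1 : t = -1 := Subtype.ext hts
  have := hreal i
  exact IsSemireal.not_isSumSq_neg_one (K i) (ht1 ▸ ht)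

theorem exists_isSemireal_isMaximalSemireal (F L : Type*) [Field F] [IsSemireal F] [Field L]
    [Algebra F L] : ∃ K : IntermediateField F L, IsSemireal K ∧ IsMaximalSemireal K L := by
  have hbot : IsSemireal (⊥ : IntermediateField F L) :=
    isSemireal_of_ringHom (botEquiv F L).toRingEquiv.toRingHom
  obtain ⟨K, -, hK⟩ := zorn_le_nonempty₀ {K : IntermediateField F L | IsSemireal K}
    (fun c hc hchain K₀ hK₀ ↦ by
      have : Nonempty c := ⟨⟨K₀, hK₀⟩⟩
      exact ⟨⨆ K : c, K.1,
        isSemireal_iSup_of_directed hchain.directedOn.directed_val fun K ↦ hc K.2,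
        fun K hK ↦ le_iSup (fun K : c ↦ K.1) ⟨K, hK⟩⟩) ⊥ hbot
  refine ⟨K, hK.prop, fun M hM ↦ eq_bot_iff.2 fun x hx ↦ ?_⟩
  have hKM : K ≤ M.restrictScalars F := fun y hy ↦ M.algebraMap_mem ⟨y, hy⟩
  exact mem_bot.2 ⟨⟨x, hK.le_of_ge hM hKM hx⟩, rfl⟩

theorem exists_irreducible_dvd_odd_natDegree {F : Type*} [Field F] {f : F[X]}
    (hf : Odd f.natDegree) : ∃ g, Irreducible g ∧ g ∣ f ∧ Odd g.natDegree := by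
  induction f using WfDvdMonoid.induction_on_irreducible with
  | zero => simp at hf
  | unit u hu => simp [natDegree_eq_zero_of_isUnit hu] at hf
  | mul a i ha hi ih =>
    rw [natDegree_mul hi.ne_zero ha, Nat.odd_add] at hf
    by_cases hi_odd : Odd i.natDegree
    · exact ⟨i, hi, dvd_mul_right i a, hi_odd⟩
    · obtain ⟨g, hg, hga, hg_odd⟩ := ih (by grind)
      exact ⟨g, hg, hga.mul_left i, hg_odd⟩

namespace IsMaximalSemireal

variable {F L : Type*} [Field F] [Field L] [Algebra F L]

theorem mem_range_of_isSemireal_adjoin (h : IsMaximalSemireal F L) {α : L}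
    (hα : IsSemireal F⟮α⟯) : α ∈ Set.range (algebraMap F L) :=
  mem_bot.1 (adjoin_simple_eq_bot_iff.1 (h _ hα))

theorem exists_isRoot_of_irreducible [IsAlgClosed L] (h : IsMaximalSemireal F L) {f : F[X]}
    (hf : Irreducible f) (hreal : ∀ P, IsSumSq P → ¬ f ∣ 1 + P) : ∃ x, f.IsRoot x := by
  obtain ⟨α, hα⟩ := IsAlgClosed.exists_aeval_eq_zero L f (degree_pos_of_irreducible hf).ne'
  obtain ⟨a, rfl⟩ :=
    h.mem_range_of_isSemireal_adjoin (isSemireal_adjoin_simple_of_not_dvd hf hα hreal)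
  exact ⟨a, (algebraMap F L).injective (by simpa [aeval_algebraMap_apply] using hα)⟩

variable [IsSemireal F]

theorem isAlgebraic (h : IsMaximalSemireal F L) : Algebra.IsAlgebraic F L where
  isAlgebraic α := by
    by_contra hα
    obtain ⟨a, rfl⟩ :=
      h.mem_range_of_isSemireal_adjoin (isSemireal_adjoin_simple_of_transcendental hα)
    exact hα (isAlgebraic_algebraMap a)

theorem isSumSq_neg_of_not_isSquare [IsAlgClosed L] (h : IsMaximalSemireal F L) {x : F}
    (hx : ¬ IsSquare x) : IsSumSq (-x) := by
  by_contra hneg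
  have hirr : Irreducible (X ^ 2 - C x) :=
    X_pow_sub_C_irreducible_of_prime Nat.prime_two fun b hb ↦ hx ⟨b, by rw [← hb, sq]⟩
  obtain ⟨r, hr⟩ := h.exists_isRoot_of_irreducible hirr fun P hP hdvd ↦
    hneg (isSumSq_neg_of_X_sq_sub_C_dvd_one_add hP hdvd)
  have hrx : r ^ 2 = x := by simpa [sub_eq_zero] using hr
  exact hx ⟨r, by rw [← hrx, sq]⟩

theorem isRealClosed [IsAlgClosed L] (h : IsMaximalSemireal F L) : IsRealClosed F where
  isSquare_or_isSquare_neg x := by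
    by_contra! hx
    have hzero : x = 0 := IsFormallyReal.eq_zero_of_isSumSq_of_neg_isSumSq
      (by simpa using h.isSumSq_neg_of_not_isSquare hx.2) (h.isSumSq_neg_of_not_isSquare hx.1)
    exact hx.1 (hzero ▸ .zero)
  exists_isRoot_of_odd_natDegree hf := by
    obtain ⟨g, hirr, hgf, hodd⟩ := exists_irreducible_dvd_odd_natDegree hf
    obtain ⟨x, hx⟩ := h.exists_isRoot_of_irreducible hirr fun P hP ↦
      not_dvd_one_add_of_odd_natDegree hodd hP
    exact ⟨x, hx.dvd hgf⟩

end IsMaximalSemireal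

end Maximal

section AlgebraicClosure

theorem finrank_eq_one_of_forall_exists_isRoot {F E : Type*} [Field F] [Field E] [Algebra F E]
    [FiniteDimensional F E] [Algebra.IsSeparable F E]
    (h : ∀ f : F[X], f.natDegree = Module.finrank F E → ∃ x, f.IsRoot x) :
    Module.finrank F E = 1 := by
  obtain ⟨α, hα⟩ := Field.exists_primitive_element F E
  rw [Field.primitive_element_iff_minpoly_natDegree_eq] at hα
  obtain ⟨x, hx⟩ := h _ hα
  rw [← hα]
  exact natDegree_eq_of_degree_eq_some
    (degree_eq_one_of_irreducible_of_root (minpoly.irreducible (.of_finite F α)) hx)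

theorem exists_isRoot_of_natDegree_eq_two {K : Type*} [Field K] [NeZero (2 : K)]
    (h : ∀ x : K, IsSquare x) {f : K[X]} (hf : f.natDegree = 2) : ∃ x, f.IsRoot x := by
  have hlead : f.coeff 2 ≠ 0 := by
    rw [← hf, coeff_natDegree, leadingCoeff_ne_zero]
    exact ne_zero_of_natDegree_gt (n := 1) (by omega)
  obtain ⟨x, hx⟩ :=
    exists_quadratic_eq_zero (a := f.coeff 2) (b := f.coeff 1) (c := f.coeff 0) hlead (h _)
  refine ⟨x, ?_⟩
  rw [IsRoot, eval_eq_sum_range, hf, ← hx]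
  simp only [Finset.sum_range_succ, Finset.sum_range_zero]
  ring

section Galois

variable {F E : Type*} [Field F] [Field E] [Algebra F E] [FiniteDimensional F E] [IsGalois F E]

theorem finrank_fixedField_eq_index (H : Subgroup Gal(E/F)) :
    Module.finrank F (fixedField H) = H.index := by
  rw [finrank_eq_fixingSubgroup_index, fixingSubgroup_fixedField]

theorem exists_finrank_eq_two_pow_of_odd (h : ∀ f : F[X], Odd f.natDegree → ∃ x, f.IsRoot x) :
    ∃ m, Module.finrank F E = 2 ^ m := by
  obtain ⟨P⟩ : Nonempty (Sylow 2 Gal(E/F)) := inferInstance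
  obtain ⟨m, hm⟩ := IsPGroup.iff_card.1 P.2
  have hodd : Odd P.index := by
    rw [← Nat.not_even_iff_odd, even_iff_two_dvd]
    exact P.not_dvd_index
  have hone : P.index = 1 := by
    rw [← finrank_fixedField_eq_index] at hodd ⊢
    exact finrank_eq_one_of_forall_exists_isRoot fun f hf ↦ h f (hf ▸ hodd)
  refine ⟨m, ?_⟩
  rw [← IsGalois.card_aut_eq_finrank, ← P.card_mul_index, hone, hm, mul_one]

theorem finrank_eq_one_of_forall_isSquare [NeZero (2 : F)] (h : ∀ x : F, IsSquare x)
    {m : ℕ} (hm : Module.finrank F E = 2 ^ m) : Module.finrank F E = 1 := by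
  cases m with
  | zero => simpa using hm
  | succ r =>
    obtain ⟨H, hH⟩ := Sylow.exists_subgroup_card_pow_prime (G := Gal(E/F)) 2 (n := r)
      (by rw [IsGalois.card_aut_eq_finrank, hm]; exact pow_dvd_pow _ r.le_succ)
    have hindex : H.index = 2 := by
      have hcard := H.card_mul_index
      rw [hH, IsGalois.card_aut_eq_finrank, hm, pow_succ] at hcard
      exact Nat.eq_of_mul_eq_mul_left (by positivity) hcard
    rw [← finrank_fixedField_eq_index] at hindex
    have hone := finrank_eq_one_of_forall_exists_isRoot (F := F) (E := fixedField H)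
      fun f hf ↦ exists_isRoot_of_natDegree_eq_two h (hf.trans hindex)
    omega

end Galois

theorem eq_top_of_forall_isSquare {F L : Type*} [Field F] [PerfectField F] [Field L]
    [Algebra F L] [IsAlgClosed L] [Algebra.IsAlgebraic F L] (K : IntermediateField F L)
    [FiniteDimensional F K] [NeZero (2 : K)]
    (hF : ∀ f : F[X], Odd f.natDegree → ∃ x, f.IsRoot x) (hK : ∀ x : K, IsSquare x) :
    K = ⊤ := by
  refine eq_top_iff.2 fun x _ ↦ ?_
  have : FiniteDimensional F F⟮x⟯ :=
    adjoin.finiteDimensional (Algebra.IsAlgebraic.isAlgebraic x).isIntegral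
  have : IsAlgClosure F L := ⟨inferInstance, inferInstance⟩
  have : Normal F L := IsAlgClosure.normal F L
  let E := normalClosure F (K ⊔ F⟮x⟯ : IntermediateField F L) L
  have hE : K ⊔ F⟮x⟯ ≤ E := le_normalClosure _
  have hKE : K ≤ E := le_sup_left.trans hE
  have hxE : x ∈ E := hE (le_sup_right (a := K) (mem_adjoin_simple_self F x))
  have : IsGalois F E := ⟨⟩
  let : Algebra K E := (inclusion hKE).toAlgebra
  have : IsScalarTower F K E := .of_algebraMap_eq' rfl
  have : FiniteDimensional K E := .right F K E
  have : IsGalois K E := IsGalois.tower_top_of_isGalois F K E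
  obtain ⟨m, hm⟩ := exists_finrank_eq_two_pow_of_odd (E := E) hF
  obtain ⟨r, -, hr⟩ := (Nat.dvd_prime_pow Nat.prime_two).1
    (hm ▸ Dvd.intro_left _ (Module.finrank_mul_finrank F K E))
  have hKE_bot : (⊥ : IntermediateField K E) = ⊤ :=
    bot_eq_top_iff_finrank_eq_one.2 (finrank_eq_one_of_forall_isSquare hK hr)
  obtain ⟨y, hy⟩ := mem_bot.1 (hKE_bot.ge (mem_top (x := (⟨x, hxE⟩ : E))))
  have hyx : (y : L) = x := congrArg Subtype.val hy
  exact hyx ▸ y.2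

theorem exists_add_mul_eq_of_mem_adjoin_simple {F L : Type*} [Field F] [Field L] [Algebra F L]
    {i x : L} (hi : i * i = -1) (hx : x ∈ F⟮i⟯) :
    ∃ a b : F, algebraMap F L a + algebraMap F L b * i = x := by
  have hroot : aeval i (X ^ 2 - C (-1 : F)) = 0 := by simp [sq, hi]
  have hmonic : (X ^ 2 - C (-1 : F)).Monic := monic_X_pow_sub_C _ two_ne_zero
  have hdeg : (minpoly F i).natDegree ≤ 2 := by
    rw [← natDegree_X_pow_sub_C (n := 2) (r := (-1 : F))]
    exact natDegree_le_of_dvd (minpoly.dvd F i hroot) hmonic.ne_zero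
  have hint : IsIntegral F i := ⟨_, hmonic, hroot⟩
  obtain ⟨p, hp, hpx⟩ := (adjoin.powerBasis hint).exists_eq_aeval (⟨x, hx⟩ : F⟮i⟯)
  rw [adjoin.powerBasis_dim] at hp
  obtain ⟨b, a, rfl⟩ := exists_eq_X_add_C_of_natDegree_le_one (p := p) (by omega)
  refine ⟨a, b, ?_⟩
  have hval := congrArg (algebraMap F⟮i⟯ L) hpx
  simpa [add_comm] using hval.symm

theorem map_eq_neg_of_mul_self_eq_neg_one {G R : Type*} [CommRing R] [NoZeroDivisors R]
    [FunLike G R R] [RingHomClass G R R] {σ : G} {i : R} (hi : i * i = -1) (hσi : σ i ≠ i) :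
    σ i = -i :=
  (mul_self_eq_mul_self_iff.1 (by rw [← map_mul, hi, map_neg, map_one])).resolve_left hσi

section RealClosed

variable {F : Type*} [Field F] [IsRealClosed F]

theorem isSquare_add_mul_self (a b : F) : IsSquare (a * a + b * b) := by
  rcases IsRealClosed.isSquare_or_isSquare_neg (a * a + b * b) with h | h
  · exact h
  · rw [IsFormallyReal.eq_zero_of_isSumSq_of_neg_isSumSq (.sq_add a (.mul_self b)) h.isSumSq]
    exact .zero

theorem isSquare_algebraMap {K : Type*} [Field K] [Algebra F K] {i : K} (hi : i * i = -1) (a : F) :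
    IsSquare (algebraMap F K a) := by
  rcases IsRealClosed.isSquare_or_isSquare_neg a with h | ⟨r, hr⟩
  · exact h.map (algebraMap F K)
  · refine ⟨algebraMap F K r * i, ?_⟩
    have hr' := congrArg (algebraMap F K) hr
    rw [map_neg, map_mul] at hr'
    linear_combination -hr' - algebraMap F K r ^ 2 * hi

/- If `z = a + b i` has norm `c ^ 2`, then `(z + c) ^ 2 = 2 (a + c) z`, and `2 (a + c)` lies in `F`,
hence is a square in `K`. -/
theorem isSquare_algebraMap_add_mul {K : Type*} [Field K] [Algebra F K] {i : K} (hi : i * i = -1)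
    (a b : F) : IsSquare (algebraMap F K a + algebraMap F K b * i) := by
  obtain ⟨c, hc⟩ := isSquare_add_mul_self a b
  by_cases hac : a + c = 0
  · have hb : b = 0 := mul_self_eq_zero.1 (by linear_combination hc + (c - a) * hac)
    simpa [hb] using isSquare_algebraMap hi a
  · obtain ⟨r, hr⟩ := isSquare_algebraMap hi (2 * (a + c))
    have hr0 : r ≠ 0 := by
      rintro rfl
      have hzero : 2 * (a + c) = 0 := (algebraMap F K).injective (by simpa using hr)
      exact mul_ne_zero two_ne_zero hac hzero
    refine ⟨(algebraMap F K a + algebraMap F K b * i + algebraMap F K c) / r, ?_⟩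
    have hc' := congrArg (algebraMap F K) hc
    simp only [map_add, map_mul, map_ofNat] at hr hc'
    field_simp
    linear_combination -(algebraMap F K a + algebraMap F K b * i) * hr
      - algebraMap F K b ^ 2 * hi + hc'

variable {L : Type*} [Field L] [Algebra F L] [IsAlgClosed L] [Algebra.IsAlgebraic F L]

theorem adjoin_simple_eq_top {i : L} (hi : i * i = -1) : F⟮i⟯ = ⊤ := by
  have : FiniteDimensional F F⟮i⟯ :=
    adjoin.finiteDimensional (Algebra.IsAlgebraic.isAlgebraic i).isIntegral
  have : CharZero F⟮i⟯ := charZero_of_injective_algebraMap (algebraMap F F⟮i⟯).injective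
  refine eq_top_of_forall_isSquare _
    (fun f hf ↦ IsRealClosed.exists_isRoot_of_odd_natDegree hf) fun z ↦ ?_
  obtain ⟨a, b, hab⟩ := exists_add_mul_eq_of_mem_adjoin_simple hi z.2
  have hgen : AdjoinSimple.gen F i * AdjoinSimple.gen F i = -1 := Subtype.ext hi
  have hz : algebraMap F F⟮i⟯ a + algebraMap F F⟮i⟯ b * AdjoinSimple.gen F i = z := Subtype.ext hab
  exact hz ▸ isSquare_algebraMap_add_mul hgen a b

theorem exists_involutive_algEquiv_map_eq_neg {i : L} (hi : i * i = -1) :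
    ∃ σ : L ≃ₐ[F] L, (∀ x, σ (σ x) = x) ∧ σ i = -i := by
  have : IsAlgClosure F L := ⟨inferInstance, inferInstance⟩
  have : Normal F L := IsAlgClosure.normal F L
  have : IsGalois F L := ⟨⟩
  have hbot : i ∉ (⊥ : IntermediateField F L) := by
    intro hmem
    obtain ⟨a, rfl⟩ := mem_bot.1 hmem
    have ha : a * a = -1 := (algebraMap F L).injective (by simpa using hi)
    exact IsSemireal.not_isSumSq_neg_one F (ha ▸ .mul_self a)
  rw [InfiniteGalois.mem_bot_iff_fixed] at hbot
  push Not at hbot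
  obtain ⟨σ, hσ⟩ := hbot
  have hσi : σ i = -i := map_eq_neg_of_mul_self_eq_neg_one hi hσ
  refine ⟨σ, fun x ↦ ?_, hσi⟩
  have htop : F⟮i⟯ = ⊤ := adjoin_simple_eq_top hi
  obtain ⟨a, b, rfl⟩ := exists_add_mul_eq_of_mem_adjoin_simple hi (htop.ge (mem_top (x := x)))
  simp [hσi]

end RealClosed

end AlgebraicClosure

section Involution

/-- The subfield of elements fixed by a ring automorphism `γ` of `k`; for an involution, the field
over which `γ`-Hermitian forms take their values on the diagonal. -/
def fixedSubfield {k : Type*} [Field k] (γ : k ≃+* k) : Subfield k :=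
  γ.toRingHom.eqLocusField (RingHom.id k)

variable {k : Type*} [Field k] {γ : k ≃+* k}

theorem mem_fixedSubfield {x : k} : x ∈ fixedSubfield γ ↔ γ x = x := Iff.rfl

theorem exists_fixed_add_mul_eq (hγ : ∀ x, γ (γ x) = x) {j : k} (hj : γ j = -j)
    (hne : γ j ≠ j) (a : k) : ∃ u v, γ u = u ∧ γ v = v ∧ u + v * j = a := by
  have htwo : 2 * j ≠ 0 := fun h ↦ hne (by linear_combination hj - h)
  have h2 : (2 : k) ≠ 0 := left_ne_zero_of_mul htwo
  have hj0 : j ≠ 0 := right_ne_zero_of_mul htwo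
  refine ⟨(a + γ a) / 2, (a - γ a) / (2 * j), ?_, ?_, by field_simp; ring⟩
  · rw [map_div₀, map_add, hγ, map_ofNat, add_comm]
  · rw [map_div₀, map_sub, hγ, map_mul, hj, map_ofNat, mul_neg, div_neg, ← neg_div, neg_sub]

theorem exists_involutive_extension {L : Type*} [Field L] [Algebra k L] [IsAlgClosed L]
    [IsSemireal (fixedSubfield γ)] (hγ : ∀ x, γ (γ x) = x) {j : k} (hj : j * j = -1)
    (hγj : γ j ≠ j) :
    ∃ σ : L ≃+* L, (∀ x, σ (σ x) = x) ∧ ∀ a, σ (algebraMap k L a) = algebraMap k L (γ a) := by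
  obtain ⟨F, hF, hmax⟩ := exists_isSemireal_isMaximalSemireal (fixedSubfield γ) L
  have := hmax.isRealClosed
  have := hmax.isAlgebraic
  obtain ⟨σ, hσ, hσj⟩ := exists_involutive_algEquiv_map_eq_neg (F := F)
    (i := algebraMap k L j) (by rw [← map_mul, hj, map_neg, map_one])
  have hfix {u : k} (hu : γ u = u) : σ (algebraMap k L u) = algebraMap k L u :=
    σ.commutes (algebraMap (fixedSubfield γ) F ⟨u, hu⟩)
  have hγj_neg := map_eq_neg_of_mul_self_eq_neg_one hj hγj
  refine ⟨σ.toRingEquiv, hσ, fun a ↦ ?_⟩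
  obtain ⟨u, v, hu, hv, rfl⟩ := exists_fixed_add_mul_eq hγ hγj_neg hγj a
  simp [hfix hu, hfix hv, hσj, hu, hv, hγj_neg]

end Involution

section QuadraticallyClosed

variable {k : Type*} [Field k] {γ : k ≃+* k}

theorem isSemireal_fixedSubfield (hk : ∀ x : k, IsSquare x) (hγ : ∀ x, γ (γ x) = x) {j : k}
    (hj : j * j = -1) (hγj : γ j ≠ j) : IsSemireal (fixedSubfield γ) := by
  have hγj_neg := map_eq_neg_of_mul_self_eq_neg_one hj hγj
  have isSquare_add (u t : fixedSubfield γ) : IsSquare (u * u + t * t) := by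
    obtain ⟨z, hz⟩ := hk (u + t * j)
    have hγz : γ z * γ z = u - t * j := by
      rw [← map_mul, ← hz, map_add, map_mul, mem_fixedSubfield.1 u.2, mem_fixedSubfield.1 t.2,
        hγj_neg, mul_neg, sub_eq_add_neg]
    refine ⟨⟨z * γ z, by rw [mem_fixedSubfield, map_mul, hγ, mul_comm]⟩, Subtype.ext ?_⟩
    calc (u * u + t * t : k)
      _ = (u + t * j) * (u - t * j) := by linear_combination t.1 ^ 2 * hj
      _ = z * γ z * (z * γ z) := by rw [hz, ← hγz]; ring
  refine .of_not_isSumSq_neg_one fun hs ↦ ?_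
  obtain ⟨t, ht⟩ := isSquare_of_isSumSq_of_forall_isSquare_add isSquare_add hs
  have htj : j * j = t * t := hj.trans (congrArg Subtype.val ht)
  have hj_mem : j ∈ fixedSubfield γ := by
    rcases mul_self_eq_mul_self_iff.1 htj with h | h <;> simp [h]
  exact hγj hj_mem

/- In characteristic two `γ` moves some `α` to `α + 1`. If `β` is a root of `X² + X = (α² + α) α`,
then its trace `β + γ β`, like `α`, is a root of `X² + X = α² + α`. So the trace is `α` or `α + 1`,
neither of which is fixed by `γ`. -/
theorem two_ne_zero_of_involutive (hk : ∀ b c : k, ∃ x, x ^ 2 + b * x + c = 0)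
    (hγ : ∀ x, γ (γ x) = x) {u : k} (hu : γ u ≠ u) : (2 : k) ≠ 0 := by
  intro h2
  obtain ⟨α, hα⟩ : ∃ α, γ α = α + 1 := by
    have htrace : u + γ u ≠ 0 := fun h ↦ hu (by linear_combination h - u * h2)
    refine ⟨u / (u + γ u), ?_⟩
    rw [map_div₀, map_add, hγ, add_comm (γ u)]
    field_simp
    linear_combination -u * h2
  obtain ⟨β, hβ⟩ := hk 1 ((α ^ 2 + α) * α)
  have hγβ := congrArg γ hβ
  simp only [map_add, map_mul, map_pow, map_one, map_zero, hα] at hγβ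
  have hroot : (β + γ β - α) * (β + γ β - (α + 1)) = 0 := by
    linear_combination hβ + hγβ
      + (β * γ β - (α + 1) * (β + γ β) - α ^ 3 - 2 * α ^ 2 - 2 * α - 1) * h2
  have hfix : γ (β + γ β) = β + γ β := by rw [map_add, hγ, add_comm]
  rcases mul_eq_zero.1 hroot with h | h
  · rw [sub_eq_zero.1 h, hα] at hfix
    simp at hfix
  · rw [sub_eq_zero.1 h, map_add, hα, map_one] at hfix
    simp at hfix

theorem exists_mul_self_eq_neg_one_map_ne (h2 : (2 : k) ≠ 0) (hk : ∀ x : k, IsSquare x)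
    (hγ : ∀ x, γ (γ x) = x) {u : k} (hu : γ u ≠ u) : ∃ j, j * j = -1 ∧ γ j ≠ j := by
  have hδ : u - γ u ≠ 0 := sub_ne_zero.2 hu.symm
  obtain ⟨w, hw⟩ := hk (u - γ u)
  have hγw : γ w * γ w = -(u - γ u) := by rw [← map_mul, ← hw, map_sub, hγ, neg_sub]
  let j := w * γ w / (u - γ u)
  have hj : j * j = -1 := by
    calc j * j
      _ = (w * w) * (γ w * γ w) / ((u - γ u) * (u - γ u)) := by
        rw [div_mul_div_comm, mul_mul_mul_comm]
      _ = -1 := by rw [← hw, hγw]; field_simp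
  have hγj : γ j = -j := by
    rw [map_div₀, map_mul, map_sub, hγ, hγ, ← neg_sub u, div_neg, mul_comm]
  refine ⟨j, hj, fun hfix ↦ ?_⟩
  have hj0 : j = 0 :=
    (mul_eq_zero.1 (by linear_combination hγj - hfix : 2 * j = 0)).resolve_left h2
  simp [hj0] at hj

end QuadraticallyClosed

theorem stmt_5_general (k ℓ ι : Type*) [Field k] [Field ℓ] [Algebra k ℓ] [IsAlgClosed ℓ]
    [Fintype ι] (hk : ∀ b c : k, ∃ x, x ^ 2 + b * x + c = 0)
    (γ : k ≃+* k) (hinv : ∀ x, γ (γ x) = x) (hne : γ ≠ RingEquiv.refl k) :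
    ∃ γbar : ℓ ≃+* ℓ, (∀ x, γbar (γbar x) = x) ∧ γbar ≠ RingEquiv.refl ℓ ∧
      (∀ a : k, γbar (algebraMap k ℓ a) = algebraMap k ℓ (γ a)) ∧
      ∀ x y : ι → k,
        (∑ j, γbar (algebraMap k ℓ (x j)) * algebraMap k ℓ (y j))
          = algebraMap k ℓ (∑ j, γ (x j) * y j) := by
  have hsq (x : k) : IsSquare x := by
    obtain ⟨r, hr⟩ := hk 0 (-x)
    exact ⟨r, by linear_combination -hr⟩
  obtain ⟨u, hu⟩ : ∃ u, γ u ≠ u := by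
    by_contra! h
    exact hne (RingEquiv.ext h)
  have h2 := two_ne_zero_of_involutive hk hinv hu
  obtain ⟨j, hj, hγj⟩ := exists_mul_self_eq_neg_one_map_ne h2 hsq hinv hu
  have := isSemireal_fixedSubfield hsq hinv hj hγj
  obtain ⟨σ, hσ, hext⟩ := exists_involutive_extension (L := ℓ) hinv hj hγj
  refine ⟨σ, hσ, ?_, hext, fun x y ↦ by simp [hext]⟩
  rintro rfl
  exact hne (RingEquiv.ext fun a ↦ (algebraMap k ℓ).injective (hext a).symm)

theorem stmt_5 (k ℓ : Type*) [Field k] [Field ℓ] [Algebra k ℓ]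
    [IsAlgClosed k] [IsAlgClosed ℓ]
    (γ : k ≃+* k) (hinv : ∀ x, γ (γ x) = x) (hne : γ ≠ RingEquiv.refl k)
    (d : ℕ) (hd : 0 < d) :
    ∃ γbar : ℓ ≃+* ℓ, (∀ x, γbar (γbar x) = x) ∧ γbar ≠ RingEquiv.refl ℓ ∧
      (∀ a : k, γbar (algebraMap k ℓ a) = algebraMap k ℓ (γ a)) ∧
      ∀ x y : Fin d → k,
        (∑ j, γbar (algebraMap k ℓ (x j)) * algebraMap k ℓ (y j))
          = algebraMap k ℓ (∑ j, γ (x j) * y j) :=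
  stmt_5_general k ℓ (Fin d) (fun b c ↦ by
    obtain ⟨x, hx⟩ := IsAlgClosed.exists_root (C 1 * X ^ 2 + C b * X + C c)
      (by rw [degree_quadratic one_ne_zero]; exact two_ne_zero)
    exact ⟨x, by simpa using hx⟩) γ hinv hne
end
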